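/- Every subgroup G of PSL(2,ℝ) that is non-elementary and not discrete contains an elliptic element of infinite order; moreover such an element is conjugate in PSL(2,ℝ) to the class of a rotation matrix R(θ) = [[cos θ, sin θ], [−sin θ, cos θ]] with θ ∈ (0,π) and θ/π irrational. -/

import Mathlib

/-!
`PSL2R` is `PSL(2,ℝ) = SL(2,ℝ)/{±1}`, realized as the quotient of `SL(2,ℝ)` by its center.
-/

open Matrix Real

noncomputable section

/-- `SL(2,ℝ)`. -/
abbrev SL2R := Matrix.SpecialLinearGroup (Fin 2) ℝ

/-- The topology on `SL(2,ℝ)` induced from the space of matrices. -/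
instance : TopologicalSpace SL2R :=
  TopologicalSpace.induced (fun g => (g : Matrix (Fin 2) (Fin 2) ℝ)) inferInstance

/-- `PSL(2,ℝ) = SL(2,ℝ)/{±1}`, the quotient of `SL(2,ℝ)` by its center. -/
abbrev PSL2R := SL2R ⧸ Subgroup.center SL2R

/-- The rotation matrix `R(θ) = [[cos θ, sin θ], [-sin θ, cos θ]]`, as an element of `SL(2,ℝ)`. -/
def rotMat (θ : ℝ) : SL2R :=
  ⟨!![Real.cos θ, Real.sin θ; -Real.sin θ, Real.cos θ], by
    simp [Matrix.det_fin_two_of]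
    ring_nf
    nlinarith [Real.sin_sq_add_cos_sq θ]⟩

/-- The absolute value of the trace, well defined on `PSL(2,ℝ)`. -/
def absTrace (A : PSL2R) : ℝ :=
  |Matrix.trace ((Quotient.out A : SL2R) : Matrix (Fin 2) (Fin 2) ℝ)|

/-- An element of `PSL(2,ℝ)` is elliptic if `|tr| < 2`. -/
def IsElliptic (A : PSL2R) : Prop := absTrace A < 2

/-- The rotation number of an element of `PSL(2,ℝ)`, in `ℝ/2πℤ`: it is `2θ` if the
element is conjugate to the class of `R(θ)` with `θ ∈ (0,π)` (i.e. elliptic), and `0`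
otherwise (hyperbolic, parabolic, identity). -/
def rot (A : PSL2R) : AddCircle (2 * π) :=
  open Classical in
  if h : ∃ θ ∈ Set.Ioo (0:ℝ) π, IsConj (QuotientGroup.mk (rotMat θ) : PSL2R) A then
    ((2 * h.choose : ℝ) : AddCircle (2 * π))
  else 0

/-- A subgroup of `PSL(2,ℝ)` is discrete if it is a discrete subset of the
topological group `PSL(2,ℝ)`. -/
def IsDiscreteSubgroup (G : Subgroup PSL2R) : Prop := DiscreteTopology G

/-- The boundary circle `∂ℍ² = ℝ ∪ {∞}`, realized as the real projective line. -/
def Boundary := Projectivization ℝ (Fin 2 → ℝ)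

/-- An element of `SL(2,ℝ)`, viewed as an invertible matrix. -/
def slInvertible (g : SL2R) : Invertible (g : Matrix (Fin 2) (Fin 2) ℝ) :=
  haveI : Invertible (g : Matrix (Fin 2) (Fin 2) ℝ).det := by rw [g.prop]; exact invertibleOne
  Matrix.invertibleOfDetInvertible _

/-- The (Möbius) action of `SL(2,ℝ)` on the boundary circle `∂ℍ² = ℝP¹`. -/
def boundaryAct (g : SL2R) (p : Boundary) : Boundary :=
  Projectivization.map
    ((Matrix.toLinearEquiv' (g : Matrix (Fin 2) (Fin 2) ℝ) (slInvertible g)) :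
      (Fin 2 → ℝ) →ₗ[ℝ] (Fin 2 → ℝ))
    (Matrix.toLinearEquiv' (g : Matrix (Fin 2) (Fin 2) ℝ) (slInvertible g)).injective p

/-- A subgroup of `PSL(2,ℝ)` is elementary if it has a finite orbit in `ℍ² ∪ ∂ℍ²`:
either the orbit of some point of the hyperbolic plane `ℍ²` is finite, or the orbit of some
point of the boundary circle `∂ℍ²` is finite. (The action of a class in `PSL(2,ℝ)` is
computed via representatives in `SL(2,ℝ)`; the center acts trivially.) -/
def IsElementary (G : Subgroup PSL2R) : Prop :=
  (∃ z : UpperHalfPlane,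
    Set.Finite {w : UpperHalfPlane | ∃ g : SL2R, (QuotientGroup.mk g : PSL2R) ∈ G ∧ g • z = w}) ∨
  (∃ p : Boundary,
    Set.Finite {q : Boundary | ∃ g : SL2R, (QuotientGroup.mk g : PSL2R) ∈ G ∧ boundaryAct g p = q})

end

/-!
Lift `G` to a subgroup `Γ` of `SL(2, ℝ)`, whose non-central elements accumulate at `1`.

Suppose first that `Γ` has no elliptic elements near `1`. For fixed `h ∈ Γ` and `g ∈ Γ` near `1`,
the elements `⁅g, h⁆` and `g * (h * g * h⁻¹)` of `Γ` then have trace at least `2`, which says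
exactly that `|det (gh - hg)| ≤ discr g`. Both sides are quadratic in the traceless part of `g`, so
a limit of the rescaled traceless parts is a non-scalar matrix `X` with
`|det (Xh - hX)| ≤ discr X` for all `h ∈ Γ`. If `h` is not elliptic, replacing `h` by `h ^ 2`
multiplies this bounded determinant by `(tr h) ^ 2 ≥ 4`, so the determinant vanishes and `h` has an
eigenline in common with `X`. Applied to the conjugates of one non-elliptic, non-central `k ∈ Γ`,
this shows that every element of `Γ` carries one of the at most two eigenlines of `X` to one of
those of `k`. Since a group is not a finite union of cosets of subgroups of infinite index
(B. H. Neumann), the orbit of some eigenline of `X` is finite.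

So `Γ` has elliptic elements `A` arbitrarily close to `1`. If `A` does not commute with `h ∈ Γ`, the
iterated commutators `C n = ⁅A, ⁅A, … ⁅A, B⁆⁆⁆` of `B = h * A * h⁻¹` tend to `1` by Zassenhaus'
estimate, without ever commuting with `A`. Hence the traces of `A * (C n * A * (C n)⁻¹)` tend to
`tr (A ^ 2)` from strictly below, and so take infinitely many values. By Fricke they all lie in
the field `ℚ(tr A, tr B, tr (A * B))`. If all elliptic elements of `Γ` had finite order, this would
be a number field, and by Kronecker it would contain only finitely many of the numbers
`2 cos (2πq)`, `q ∈ ℚ`, which are the traces of elements of finite order.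
-/

open Filter Topology
open scoped MatrixGroups commutatorElement LinearAlgebra.Projectivization Pointwise

section TwoByTwo

variable {R : Type*} [CommRing R]

lemma coe_inv_eq_trace_smul_one_sub (g : SL(2, R)) :
    (g⁻¹).1 = g.1.trace • (1 : Matrix (Fin 2) (Fin 2) R) - g.1 := by
  ext i j
  fin_cases i <;> fin_cases j <;> simp [adjugate_fin_two, trace_fin_two]

lemma commute_coe_iff {g h : SL(2, R)} : Commute g.1 h.1 ↔ Commute g h :=
  (Subtype.ext_iff (a1 := g * h) (a2 := h * g)).symm

lemma trace_coe_conj (g h : SL(2, R)) : (h * g * h⁻¹).1.trace = g.1.trace := by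
  rw [Matrix.SpecialLinearGroup.coe_mul, trace_mul_comm, ← Matrix.SpecialLinearGroup.coe_mul,
    inv_mul_cancel_left]

lemma trace_coe_mul_add_trace_coe_mul_inv (g h : SL(2, R)) :
    (g * h).1.trace + (g * h⁻¹).1.trace = g.1.trace * h.1.trace := by
  rw [Matrix.SpecialLinearGroup.coe_mul g h⁻¹, coe_inv_eq_trace_smul_one_sub, mul_sub, trace_sub,
    ← Matrix.SpecialLinearGroup.coe_mul, add_sub_cancel, mul_smul_comm, mul_one, trace_smul,
    smul_eq_mul, mul_comm]

lemma trace_mul_conj (g h : SL(2, R)) :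
    (g * (h * g * h⁻¹)).1.trace = g.1.trace ^ 2 - ⁅g, h⁆.1.trace := by
  have key := trace_coe_mul_add_trace_coe_mul_inv g (h * g * h⁻¹)
  have hcomm : g * (h * g * h⁻¹)⁻¹ = ⁅g, h⁆ := by rw [commutatorElement_def]; group
  rw [hcomm, trace_coe_conj] at key
  linear_combination key

lemma trace_commutator (g h : SL(2, R)) : ⁅g, h⁆.1.trace = 2 - ⁅g.1, h.1⁆.det := by
  have hg := g.det_coe
  have hh := h.det_coe
  rw [det_fin_two] at hg hh
  simp only [commutatorElement_def, Matrix.SpecialLinearGroup.coe_mul,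
    Matrix.SpecialLinearGroup.coe_inv, Ring.lie_def, adjugate_fin_two, trace_fin_two, det_fin_two,
    mul_apply, Fin.sum_univ_two, Matrix.sub_apply, of_apply, cons_val', cons_val_zero,
    cons_val_one, cons_val_fin_one]
  grind

lemma coe_mul_coe_self (g : SL(2, R)) : g.1 * g.1 = g.1.trace • g.1 - 1 := by
  have hinv := congr_arg (g.1 * ·) (coe_inv_eq_trace_smul_one_sub g)
  simp only [← Matrix.SpecialLinearGroup.coe_mul, mul_inv_cancel, mul_sub, mul_smul_comm, mul_one,
    Matrix.SpecialLinearGroup.coe_one] at hinv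
  rw [hinv, sub_sub_cancel, Matrix.SpecialLinearGroup.coe_mul]

lemma lie_coe_sq (X : Matrix (Fin 2) (Fin 2) R) (g : SL(2, R)) :
    ⁅X, (g ^ 2).1⁆ = g.1.trace • ⁅X, g.1⁆ := by
  rw [sq, Matrix.SpecialLinearGroup.coe_mul, coe_mul_coe_self]
  simp only [Ring.lie_def, mul_sub, sub_mul, mul_smul_comm, smul_mul_assoc, smul_sub, mul_one,
    one_mul, sub_sub_sub_cancel_right]

lemma trace_coe_sq (g : SL(2, R)) : (g ^ 2).1.trace = g.1.trace ^ 2 - 2 := by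
  have key := trace_coe_mul_add_trace_coe_mul_inv g g
  rw [mul_inv_cancel, Matrix.SpecialLinearGroup.coe_one, trace_one, Fintype.card_fin, ← sq] at key
  push_cast at key
  linear_combination key

lemma discr_coe (g : SL(2, R)) : g.1.discr = g.1.trace ^ 2 - 4 := by
  rw [discr_fin_two, g.det_coe, mul_one]

lemma discr_smul_one_add_smul (X : Matrix (Fin 2) (Fin 2) R) (a b : R) :
    (a • (1 : Matrix (Fin 2) (Fin 2) R) + b • X).discr = b ^ 2 * X.discr := by
  simp only [discr_fin_two, trace_fin_two, det_fin_two, Matrix.add_apply, Matrix.smul_apply,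
    one_apply_eq, smul_eq_mul, one_apply_ne one_ne_zero, one_apply_ne zero_ne_one]
  ring

lemma mul_mul_self_eq (X M : Matrix (Fin 2) (Fin 2) R) :
    X * M * X = (M * X).trace • X - X.det • M.adjugate := by
  ext i j
  fin_cases i <;> fin_cases j <;>
    simp [mul_apply, trace_fin_two, det_fin_two, Fin.sum_univ_two, adjugate_fin_two] <;> ring

lemma trace_mul_lie_self (X M : Matrix (Fin 2) (Fin 2) R) :
    (X * ⁅X, M⁆).trace = 0 := by
  rw [Ring.lie_def, mul_sub, trace_sub, ← mul_assoc X M X, trace_mul_comm (X * M), sub_self]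

lemma discr_smul (c : R) (M : Matrix (Fin 2) (Fin 2) R) :
    (c • M).discr = c ^ 2 * M.discr := by
  simp only [discr_fin_two, trace_smul, det_smul, Fintype.card_fin, smul_eq_mul]
  ring

lemma det_lie_smul (c : R) (M N : Matrix (Fin 2) (Fin 2) R) :
    ⁅c • M, N⁆.det = c ^ 2 * ⁅M, N⁆.det := by
  rw [Ring.lie_def, smul_mul_assoc, mul_smul_comm, ← smul_sub, ← Ring.lie_def, det_smul,
    Fintype.card_fin]

end TwoByTwo

lemma exists_eq_smul_one_add_smul_of_commute {K : Type*} [Field K]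
    {X M : Matrix (Fin 2) (Fin 2) K} (hX : X 1 0 ≠ 0) (h : Commute X M) :
    ∃ a b : K, M = a • 1 + b • X := by
  have hXM := Matrix.ext_iff.mpr h.eq
  simp only [mul_apply, Fin.sum_univ_two, Fin.forall_fin_two] at hXM
  obtain ⟨⟨h00, -⟩, h10, -⟩ := hXM
  refine ⟨M 0 0 - M 1 0 / X 1 0 * X 0 0, M 1 0 / X 1 0, ?_⟩
  ext i j
  fin_cases i <;> fin_cases j <;> simp <;> field_simp <;> grind

section Elliptic

variable {F : Type*} [Field F] [LinearOrder F] [IsStrictOrderedRing F]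
  {X M N : Matrix (Fin 2) (Fin 2) F}

lemma isElliptic_coe_iff {g : SL(2, F)} : g.1.IsElliptic ↔ |g.1.trace| < 2 := by
  rw [Matrix.IsElliptic, discr_coe, sub_neg, ← abs_two (α := F), ← sq_lt_sq]
  norm_num

lemma det_lie_neg_of_isElliptic (hX : X.IsElliptic) (hXM : ¬ Commute X M) : ⁅X, M⁆.det < 0 := by
  set Y := ⁅X, M⁆ with hY
  have htrY : Y 1 1 = -Y 0 0 := by
    simp only [hY, Ring.lie_def, mul_apply, Fin.sum_univ_two, Matrix.sub_apply]
    ring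
  have htrXY : X 1 0 * Y 0 1 = (X 1 1 - X 0 0) * Y 0 0 - X 0 1 * Y 1 0 := by
    simp only [hY, Ring.lie_def, mul_apply, Fin.sum_univ_two, Matrix.sub_apply]
    ring
  -- Complete the square in `Y.det`, where `Y` is restricted by `tr Y = 0` and `tr (X * Y) = 0`.
  have key : (2 * X 1 0) ^ 2 * -Y.det =
      (2 * X 1 0 * Y 0 0 - (X 0 0 - X 1 1) * Y 1 0) ^ 2 + -X.discr * Y 1 0 ^ 2 := by
    rw [discr_fin_two, trace_fin_two, det_fin_two, det_fin_two, htrY]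
    linear_combination 4 * X 1 0 * Y 1 0 * htrXY
  have hc := hX.c_ne_zero
  have hpos : 0 < (2 * X 1 0 * Y 0 0 - (X 0 0 - X 1 1) * Y 1 0) ^ 2 + -X.discr * Y 1 0 ^ 2 := by
    have hdiscr : 0 < -X.discr := neg_pos.mpr hX
    by_cases h10 : Y 1 0 = 0
    · have h00 : Y 0 0 ≠ 0 := fun h00 ↦ hXM <| sub_eq_zero.mp <| by
        change Y = 0
        ext i j
        fin_cases i <;> fin_cases j <;> simp_all
      simp only [h10, mul_zero, sub_zero, ne_eq, OfNat.ofNat_ne_zero, not_false_eq_true, zero_pow,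
        add_zero]
      positivity
    · positivity
  rw [← key] at hpos
  exact neg_pos.mp (pos_of_mul_pos_right hpos (sq_nonneg _))

lemma commute_of_isElliptic (hX : X.IsElliptic) (hM : Commute X M)
    (hN : Commute X N) : Commute M N := by
  obtain ⟨a, b, rfl⟩ := exists_eq_smul_one_add_smul_of_commute hX.c_ne_zero hM
  exact ((Commute.one_left N).smul_left a).add_left (hN.smul_left b)

lemma discr_nonpos_of_isElliptic_of_commute (hX : X.IsElliptic) (hM : Commute X M) :
    M.discr ≤ 0 := by
  obtain ⟨a, b, rfl⟩ := exists_eq_smul_one_add_smul_of_commute hX.c_ne_zero hM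
  rw [discr_smul_one_add_smul]
  exact mul_nonpos_of_nonneg_of_nonpos (sq_nonneg b) hX.le

lemma two_lt_trace_commutator {g h : SL(2, F)} (hg : g.1.IsElliptic) (hgh : ¬ Commute g h) :
    2 < ⁅g, h⁆.1.trace := by
  rw [trace_commutator]
  linarith [det_lie_neg_of_isElliptic hg (commute_coe_iff.not.mpr hgh)]

lemma not_commute_commutator {g h : SL(2, F)} (hg : g.1.IsElliptic) (hgh : ¬ Commute g h) :
    ¬ Commute g ⁅g, h⁆ := fun hcomm ↦ by
  have hdiscr := discr_nonpos_of_isElliptic_of_commute hg (commute_coe_iff.mpr hcomm)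
  rw [discr_coe] at hdiscr
  nlinarith [two_lt_trace_commutator hg hgh]

lemma not_commute_conj {g h : SL(2, F)} (hg : g.1.IsElliptic) (hgh : ¬ Commute g h) :
    ¬ Commute g (h * g * h⁻¹) := fun hcomm ↦ by
  have hconj : ⁅g, h⁆ = g * (h * g * h⁻¹)⁻¹ := by rw [commutatorElement_def]; group
  exact not_commute_commutator hg hgh (hconj ▸ (Commute.refl g).mul_right hcomm.inv_right)

end Elliptic

section Fricke

variable {R : Type*} [CommRing R]

lemma mul_eq_trace_smul_sub_mul (X Y : Matrix (Fin 2) (Fin 2) R) :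
    Y * X = Y.trace • X + X.trace • Y + ((X * Y).trace - X.trace * Y.trace) • 1 - X * Y := by
  ext i j
  fin_cases i <;> fin_cases j <;> simp [trace_fin_two, mul_apply, Fin.sum_univ_two] <;> ring_nf

lemma coe_mul_coe_mul_coe (A B : SL(2, R)) :
    B.1 * (A.1 * B.1) =
      (A * B).1.trace • B.1 - A.1.trace • (1 : Matrix (Fin 2) (Fin 2) R) + A.1 := by
  rw [← mul_assoc, mul_eq_trace_smul_sub_mul A.1]
  simp only [add_mul, sub_mul, smul_mul_assoc, mul_assoc, one_mul, coe_mul_coe_self B, mul_sub,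
    mul_smul_comm, mul_one, Matrix.SpecialLinearGroup.coe_mul]
  module

/-- The span of `1`, `A`, `B` and `AB`, over a ring of scalars containing the traces of these
matrices; it is then the ring generated by `A` and `B` over these scalars. -/
def frickeSpan (K : Subring R) (A B : SL(2, R)) : Submodule K (Matrix (Fin 2) (Fin 2) R) :=
  Submodule.span K {1, A.1, B.1, A.1 * B.1}

variable {K : Subring R} {A B C : SL(2, R)} {M : Matrix (Fin 2) (Fin 2) R}

lemma one_mem_frickeSpan : 1 ∈ frickeSpan K A B := Submodule.subset_span (by simp)

lemma trace_mem_of_mem_frickeSpan (hA : A.1.trace ∈ K) (hB : B.1.trace ∈ K)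
    (hAB : (A * B).1.trace ∈ K) (hM : M ∈ frickeSpan K A B) : M.trace ∈ K := by
  induction hM using Submodule.span_induction with
  | mem M hM =>
    rcases hM with rfl | rfl | rfl | rfl
    · rw [trace_one]
      exact natCast_mem K _
    exacts [hA, hB, hAB]
  | zero => rw [trace_zero]; exact zero_mem K
  | add M N _ _ hM hN => rw [trace_add]; exact add_mem hM hN
  | smul c M _ hM => rw [trace_smul]; exact mul_mem c.2 hM

lemma generator_mul_mem_frickeSpan (hA : A.1.trace ∈ K) (hB : B.1.trace ∈ K)
    (hAB : (A * B).1.trace ∈ K) (hC : C ∈ ({A, B} : Set SL(2, R)))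
    (hM : M ∈ frickeSpan K A B) : C.1 * M ∈ frickeSpan K A B := by
  set S := frickeSpan K A B
  have hsmul {r : R} (hr : r ∈ K) {N : Matrix (Fin 2) (Fin 2) R} (hN : N ∈ S) : r • N ∈ S :=
    S.smul_mem ⟨r, hr⟩ hN
  have h1 : 1 ∈ S := one_mem_frickeSpan
  have hAS : A.1 ∈ S := Submodule.subset_span (by simp)
  have hBS : B.1 ∈ S := Submodule.subset_span (by simp)
  have hABS : A.1 * B.1 ∈ S := Submodule.subset_span (by simp)
  suffices hspan : ∀ N ∈ ({1, A.1, B.1, A.1 * B.1} : Set (Matrix (Fin 2) (Fin 2) R)),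
      C.1 * N ∈ S from
    Submodule.span_le (p := S.comap (LinearMap.mulLeft K C.1)).mpr hspan hM
  rcases hC with rfl | rfl
  · rintro N (rfl | rfl | rfl | rfl)
    · rwa [mul_one]
    · rw [coe_mul_coe_self]
      exact S.sub_mem (hsmul hA hAS) h1
    · exact hABS
    · rw [← mul_assoc, coe_mul_coe_self, sub_mul, smul_mul_assoc, one_mul]
      exact S.sub_mem (hsmul hA hABS) hBS
  · rintro N (rfl | rfl | rfl | rfl)
    · rwa [mul_one]
    · rw [mul_eq_trace_smul_sub_mul]
      exact S.sub_mem (S.add_mem (S.add_mem (hsmul hB hAS) (hsmul hA hBS))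
        (hsmul (sub_mem hAB (mul_mem hA hB)) h1)) hABS
    · rw [coe_mul_coe_self]
      exact S.sub_mem (hsmul hB hBS) h1
    · rw [coe_mul_coe_mul_coe]
      exact S.add_mem (S.sub_mem (hsmul hAB hBS) (hsmul hA h1)) hAS

lemma coe_mul_mem_frickeSpan (hA : A.1.trace ∈ K) (hB : B.1.trace ∈ K)
    (hAB : (A * B).1.trace ∈ K) (hC : C ∈ Subgroup.closure {A, B})
    (hM : M ∈ frickeSpan K A B) : C.1 * M ∈ frickeSpan K A B := by
  induction hC using Subgroup.closure_induction generalizing M with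
  | mem C hC => exact generator_mul_mem_frickeSpan hA hB hAB hC hM
  | one => rwa [Matrix.SpecialLinearGroup.coe_one, one_mul]
  | mul C D _ _ hC hD =>
    rw [Matrix.SpecialLinearGroup.coe_mul, mul_assoc]
    exact hC (hD hM)
  | inv C _ hC =>
    have htr : C.1.trace ∈ K := by
      simpa using trace_mem_of_mem_frickeSpan hA hB hAB (hC one_mem_frickeSpan)
    rw [coe_inv_eq_trace_smul_one_sub, sub_mul, smul_mul_assoc, one_mul]
    exact sub_mem ((frickeSpan K A B).smul_mem ⟨_, htr⟩ hM) (hC hM)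

lemma trace_mem_of_mem_closure_pair (hA : A.1.trace ∈ K) (hB : B.1.trace ∈ K)
    (hAB : (A * B).1.trace ∈ K) (hC : C ∈ Subgroup.closure {A, B}) : C.1.trace ∈ K := by
  rw [← mul_one C.1]
  exact trace_mem_of_mem_frickeSpan hA hB hAB
    (coe_mul_mem_frickeSpan hA hB hAB hC one_mem_frickeSpan)

end Fricke

lemma trace_coe_pow {R : Type*} [CommRing R] (g : SL(2, R)) (n : ℕ) :
    (g ^ n).1.trace = (Polynomial.Chebyshev.C R n).eval g.1.trace := by
  induction n using Nat.twoStepInduction with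
  | zero => simp [trace_one]
  | one => simp
  | more n ih₀ ih₁ =>
    have key := trace_coe_mul_add_trace_coe_mul_inv (g ^ (n + 1)) g
    rw [← pow_succ, pow_succ g n, mul_inv_cancel_right, ← pow_succ, ih₀, ih₁] at key
    push_cast at key ⊢
    rw [Polynomial.Chebyshev.C_add_two]
    simp only [Polynomial.eval_sub, Polynomial.eval_mul, Polynomial.eval_X]
    linear_combination key

lemma eval_chebyshev_C_trace_eq_two {R : Type*} [CommRing R] {g : SL(2, R)} {n : ℕ}
    (h : g ^ n = 1) : (Polynomial.Chebyshev.C R n).eval g.1.trace = 2 := by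
  rw [← trace_coe_pow, h, Matrix.SpecialLinearGroup.coe_one, trace_one, Fintype.card_fin]
  rfl

lemma exists_eq_two_mul_cos_of_eval_chebyshev_C_eq_two {t : ℂ} {n : ℕ} (hn : n ≠ 0)
    (h : (Polynomial.Chebyshev.C ℂ n).eval t = 2) : ∃ q : ℚ, t = 2 * Complex.cos (q * π) := by
  obtain ⟨θ, hθ⟩ := Complex.cos_surjective (t / 2)
  obtain rfl : t = 2 * Complex.cos θ := by rw [hθ]; ring
  rw [Polynomial.Chebyshev.C_two_mul_complex_cos, mul_eq_left₀ two_ne_zero,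
    Complex.cos_eq_one_iff] at h
  obtain ⟨k, hk⟩ := h
  refine ⟨2 * k / n, ?_⟩
  have hn' : (n : ℂ) ≠ 0 := Nat.cast_ne_zero.mpr hn
  congr 2
  push_cast at hk ⊢
  field_simp
  linear_combination -hk

lemma finite_setOf_eval_chebyshev_C_eq_two (K : Type*) [Field K] [NumberField K] :
    {t : K | ∃ n : ℕ, n ≠ 0 ∧ (Polynomial.Chebyshev.C K n).eval t = 2}.Finite := by
  refine (NumberField.Embeddings.finite_of_norm_le K ℂ 2).subset ?_
  rintro t ⟨n, hn, ht⟩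
  have hcos (φ : K →+* ℂ) : ∃ q : ℚ, φ t = 2 * Complex.cos (q * π) := by
    refine exists_eq_two_mul_cos_of_eval_chebyshev_C_eq_two hn ?_
    rw [← Polynomial.Chebyshev.map_C φ, Polynomial.eval_map_apply, ht, map_ofNat]
  refine ⟨?_, fun φ ↦ ?_⟩
  · obtain ⟨φ⟩ : Nonempty (K →+* ℂ) := inferInstance
    obtain ⟨q, hq⟩ := hcos φ
    rw [← isIntegral_algHom_iff φ.toIntAlgHom φ.injective, RingHom.toIntAlgHom_apply, hq]
    exact Complex.isIntegral_two_mul_cos_rat_mul_pi q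
  · obtain ⟨q, hq⟩ := hcos φ
    rw [hq, norm_mul, Complex.norm_two, ← Complex.ofReal_ratCast, ← Complex.ofReal_mul,
      ← Complex.ofReal_cos, Complex.norm_real,
      Real.norm_eq_abs]
    linarith [Real.abs_cos_le_one (q * π)]

lemma isIntegral_trace_of_isOfFinOrder {g : SL(2, ℝ)} (hg : IsOfFinOrder g) :
    IsIntegral ℤ g.1.trace := by
  obtain ⟨n, hn, hgn⟩ := isOfFinOrder_iff_pow_eq_one.mp hg
  have hC : (Polynomial.Chebyshev.C ℂ n).eval (g.1.trace : ℂ) = 2 := by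
    rw [← Polynomial.Chebyshev.complex_ofReal_eval_C, eval_chebyshev_C_trace_eq_two hgn,
      Complex.ofReal_ofNat]
  obtain ⟨q, hq⟩ := exists_eq_two_mul_cos_of_eval_chebyshev_C_eq_two hn.ne' hC
  rw [← isIntegral_algHom_iff Complex.ofRealHom.toIntAlgHom Complex.ofReal_injective,
    RingHom.toIntAlgHom_apply, Complex.ofRealHom_eq_coe, hq]
  exact Complex.isIntegral_two_mul_cos_rat_mul_pi q

lemma finite_setOf_trace_of_isOfFinOrder (K : IntermediateField ℚ ℝ) [NumberField K] :
    {t ∈ (K : Set ℝ) | ∃ g : SL(2, ℝ), IsOfFinOrder g ∧ g.1.trace = t}.Finite := by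
  refine ((finite_setOf_eval_chebyshev_C_eq_two K).image (algebraMap K ℝ)).subset ?_
  rintro _ ⟨htK, g, hg, rfl⟩
  obtain ⟨n, hn, hgn⟩ := isOfFinOrder_iff_pow_eq_one.mp hg
  refine ⟨⟨_, htK⟩, ⟨n, hn.ne', (algebraMap K ℝ).injective ?_⟩, rfl⟩
  rw [Polynomial.Chebyshev.algebraMap_eval_C, map_ofNat]
  exact eval_chebyshev_C_trace_eq_two hgn

section NormedRing

variable {α : Type*} [NormedRing α] [NormOneClass α] {a b : αˣ}

lemma one_sub_norm_mul_norm_inv_le (a : αˣ) : (1 - ‖a.val - 1‖) * ‖a⁻¹.val‖ ≤ 1 := by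
  have hinv : a⁻¹.val = 1 - (a.val - 1) * a⁻¹.val := by simp [sub_mul]
  have hle : ‖a⁻¹.val‖ ≤ 1 + ‖a.val - 1‖ * ‖a⁻¹.val‖ := calc
    ‖a⁻¹.val‖ = ‖1 - (a.val - 1) * a⁻¹.val‖ := congr_arg _ hinv
    _ ≤ ‖(1 : α)‖ + ‖(a.val - 1) * a⁻¹.val‖ := norm_sub_le _ _
    _ ≤ 1 + ‖a.val - 1‖ * ‖a⁻¹.val‖ := by rw [norm_one]; gcongr; exact norm_mul_le _ _
  linarith

lemma norm_commutator_sub_one_le_half (ha : ‖a.val - 1‖ ≤ 1 / 8) (hb : ‖b.val - 1‖ ≤ 1 / 8) :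
    ‖⁅a, b⁆.val - 1‖ ≤ ‖b.val - 1‖ / 2 := by
  have ha' : ‖a⁻¹.val‖ ≤ 8 / 7 := by
    nlinarith [one_sub_norm_mul_norm_inv_le a, norm_nonneg a⁻¹.val]
  have hb' : ‖b⁻¹.val‖ ≤ 8 / 7 := by
    nlinarith [one_sub_norm_mul_norm_inv_le b, norm_nonneg b⁻¹.val]
  calc ‖⁅a, b⁆.val - 1‖
      ≤ 2 * ‖a⁻¹.val‖ * ‖b⁻¹.val‖ * ‖a.val - 1‖ * ‖b.val - 1‖ :=
        norm_commutator_units_sub_one_le a b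
    _ ≤ 2 * (8 / 7) * (8 / 7) * (1 / 8) * ‖b.val - 1‖ := by gcongr
    _ ≤ ‖b.val - 1‖ / 2 := by linarith [norm_nonneg (b.val - 1)]

lemma tendsto_iterate_commutator (ha : ‖a.val - 1‖ ≤ 1 / 8) (hb : ‖b.val - 1‖ ≤ 1 / 8) :
    Tendsto (fun n ↦ ((fun c ↦ ⁅a, c⁆)^[n] b).val) atTop (𝓝 1) := by
  have hbound (n : ℕ) : ‖((fun c ↦ ⁅a, c⁆)^[n] b).val - 1‖ ≤ 1 / 8 * (1 / 2) ^ n := by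
    induction n with
    | zero => simpa using hb
    | succ n ih =>
      have hle : (1 / 8 : ℝ) * (1 / 2) ^ n ≤ 1 / 8 :=
        mul_le_of_le_one_right (by norm_num) (pow_le_one₀ (by norm_num) (by norm_num))
      rw [Function.iterate_succ_apply', pow_succ]
      linarith [norm_commutator_sub_one_le_half ha (ih.trans hle)]
  have hlim : Tendsto (fun n : ℕ ↦ (1 / 8 : ℝ) * (1 / 2) ^ n) atTop (𝓝 0) := by
    rw [← mul_zero (1 / 8 : ℝ)]
    exact (tendsto_pow_atTop_nhds_zero_of_lt_one one_half_pos.le one_half_lt_one).const_mul _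
  exact tendsto_iff_norm_sub_tendsto_zero.mpr
    (squeeze_zero (fun _ ↦ norm_nonneg _) hbound hlim)

end NormedRing

-- The topology of `SL2R` unfolds to the one Mathlib puts on special linear groups.
instance : IsTopologicalGroup SL2R :=
  @Matrix.SpecialLinearGroup.topologicalGroup (Fin 2) ℝ _ _ _ _ _

lemma isInducing_coe_SL2R : IsInducing (fun g : SL2R ↦ g.1) := ⟨rfl⟩

lemma continuous_trace_coe : Continuous (fun g : SL2R ↦ g.1.trace) :=
  isInducing_coe_SL2R.continuous.matrix_trace

attribute [local instance] Matrix.linftyOpNormedRing Matrix.linfty_opNormOneClass in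
lemma eventually_tendsto_iterate_commutator :
    ∀ᶠ p : SL2R × SL2R in 𝓝 (1, 1),
      Tendsto (fun n ↦ (fun C ↦ ⁅p.1, C⁆)^[n] p.2) atTop (𝓝 1) := by
  have hnear : ∀ᶠ g : SL2R in 𝓝 1, ‖g.1 - 1‖ ≤ 1 / 8 := by
    have hcont : Continuous fun g : SL2R ↦ ‖g.1 - 1‖ :=
      (isInducing_coe_SL2R.continuous.sub continuous_const).norm
    exact (hcont.tendsto' 1 0 (by simp)).eventually_le_const (by norm_num)
  rw [nhds_prod_eq]
  filter_upwards [hnear.prod_mk hnear] with ⟨A, B⟩ ⟨hA, hB⟩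
  have hsemi : Function.Semiconj Matrix.SpecialLinearGroup.toGL
    (fun C : SL2R ↦ ⁅A, C⁆) (fun C ↦ ⁅A.toGL, C⁆) := fun C ↦ map_commutatorElement _ _ _
  rw [isInducing_coe_SL2R.tendsto_nhds_iff]
  refine (tendsto_iterate_commutator (a := A.toGL) (b := B.toGL) hA hB).congr fun n ↦ ?_
  rw [← (hsemi.iterate_right n).eq]
  rfl

lemma frequently_mk_mem_and_notMem {A : Type*} [Group A] [TopologicalSpace A] [IsTopologicalGroup A]
    {N : Subgroup A} [N.Normal] {G : Subgroup (A ⧸ N)} (hG : ¬ DiscreteTopology G) :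
    ∃ᶠ g : A in 𝓝 1, (g : A ⧸ N) ∈ G ∧ g ∉ N := by
  refine fun hev ↦ hG ?_
  have hquot : ∀ᶠ x : A ⧸ N in 𝓝 1, x ∈ G → x = 1 := by
    rw [← QuotientGroup.mk_one, QuotientGroup.nhds_eq, eventually_map]
    filter_upwards [hev] with g hg hgG
    exact (QuotientGroup.eq_one_iff g).mpr (not_not.mp fun hgN ↦ hg ⟨hgG, hgN⟩)
  have hsub : ∀ᶠ x : G in 𝓝 1, x = 1 := by
    filter_upwards [continuous_subtype_val.continuousAt.eventually hquot] with x hx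
    exact Subtype.ext (hx x.2)
  refine discreteTopology_of_isOpen_singleton_one (isOpen_iff_mem_nhds.mpr ?_)
  rintro _ rfl
  exact hsub

lemma eq_one_or_eq_neg_one_of_mem_center {g : SL2R} (hg : g ∈ Subgroup.center SL2R) :
    g = 1 ∨ g = -1 := by
  obtain ⟨r, hr, hrg⟩ := Matrix.SpecialLinearGroup.mem_center_iff.mp hg
  rw [Fintype.card_fin, sq_eq_one_iff] at hr
  rcases hr with rfl | rfl
  · exact .inl (Subtype.ext (by rw [← hrg, map_one]; rfl))
  · exact .inr (Subtype.ext (by rw [← hrg, map_neg, map_one]; rfl))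

lemma neg_one_mem_center : (-1 : SL2R) ∈ Subgroup.center SL2R :=
  Subgroup.mem_center_iff.mpr fun g ↦ (Commute.neg_one_right g).eq

lemma coe_neg_PSL2R (g : SL2R) : ((-g : SL2R) : PSL2R) = g := by
  rw [← mul_neg_one, QuotientGroup.mk_mul_of_mem _ neg_one_mem_center]

lemma absTrace_mk (g : SL2R) : absTrace g = |g.1.trace| := by
  have hout : g⁻¹ * (g : PSL2R).out ∈ Subgroup.center SL2R :=
    QuotientGroup.eq.mp (QuotientGroup.out_eq' (g : PSL2R)).symm
  rw [absTrace]
  rcases eq_one_or_eq_neg_one_of_mem_center hout with h | h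
  · rw [← inv_mul_eq_one.mp h]
  · rw [inv_mul_eq_iff_eq_mul, mul_neg_one] at h
    rw [h, Matrix.SpecialLinearGroup.coe_neg, trace_neg, abs_neg]

lemma isElliptic_mk_iff {g : SL2R} : _root_.IsElliptic (g : PSL2R) ↔ g.1.IsElliptic := by
  rw [_root_.IsElliptic, absTrace_mk, isElliptic_coe_iff]

lemma isOfFinOrder_of_mk {g : SL2R} (hg : IsOfFinOrder (g : PSL2R)) : IsOfFinOrder g := by
  obtain ⟨n, hn, hgn⟩ := isOfFinOrder_iff_pow_eq_one.mp hg
  rw [← QuotientGroup.mk_pow, QuotientGroup.eq_one_iff] at hgn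
  refine IsOfFinOrder.of_pow ?_ hn.ne'
  rcases eq_one_or_eq_neg_one_of_mem_center hgn with h | h <;> rw [h]
  · exact IsOfFinOrder.one
  · exact isOfFinOrder_iff_pow_eq_one.mpr ⟨2, two_pos, neg_one_sq⟩

section Rotation

lemma rotMat_add (θ φ : ℝ) : rotMat (θ + φ) = rotMat θ * rotMat φ := by
  refine Subtype.ext ?_
  rw [Matrix.SpecialLinearGroup.coe_mul]
  ext i j
  fin_cases i <;> fin_cases j <;> simp [rotMat, mul_apply, cos_add, sin_add] <;> ring

lemma rotMat_pi : rotMat π = -1 := by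
  ext i j
  fin_cases i <;> fin_cases j <;> simp [rotMat]

lemma rotMat_zero : rotMat 0 = 1 := by
  ext i j
  fin_cases i <;> fin_cases j <;> simp [rotMat]

lemma rotMat_pow (θ : ℝ) (n : ℕ) : rotMat θ ^ n = rotMat (n * θ) := by
  induction n with
  | zero => simp [rotMat_zero]
  | succ n ih => rw [pow_succ, ih, ← rotMat_add, Nat.cast_add_one, add_one_mul]

lemma periodic_mk_rotMat : Function.Periodic (fun θ ↦ (rotMat θ : PSL2R)) π := fun θ ↦ by
  simp only [rotMat_add, rotMat_pi, mul_neg_one, coe_neg_PSL2R]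

lemma isOfFinOrder_mk_rotMat {θ : ℝ} (hθ : ¬ Irrational (θ / π)) :
    IsOfFinOrder (rotMat θ : PSL2R) := by
  obtain ⟨q, hq⟩ := not_not.mp hθ
  refine isOfFinOrder_iff_pow_eq_one.mpr ⟨q.den, q.den_pos, ?_⟩
  have hmul : q.den * θ = q.num * π := by
    rw [← (eq_div_iff pi_ne_zero).mp hq, ← mul_assoc, mul_comm (q.den : ℝ)]
    exact_mod_cast congr_arg (· * π) (congr_arg ((↑) : ℚ → ℝ) q.mul_den_eq_num)
  rw [← QuotientGroup.mk_pow, rotMat_pow, hmul, periodic_mk_rotMat.int_mul_eq, rotMat_zero,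
    QuotientGroup.mk_one]

lemma toGL_smul (g : SL2R) (z : UpperHalfPlane) : g.toGL • z = g • z := by
  rw [MulAction.compHom_smul_def]
  congr 1

lemma exists_eq_rotMat_of_smul_I {g : SL2R} (hg : g • UpperHalfPlane.I = UpperHalfPlane.I) :
    ∃ θ, g = rotMat θ := by
  rw [← toGL_smul, UpperHalfPlane.gl_smul_I_eq_I_iff_of_pos (by simp)] at hg
  obtain ⟨h00 : g.1 0 0 = g.1 1 1, h01 : g.1 0 1 = -g.1 1 0⟩ := hg
  have hnorm : ‖(⟨g.1 0 0, g.1 0 1⟩ : ℂ)‖ = 1 := by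
    have hdet := g.det_coe
    rw [det_fin_two] at hdet
    rw [← pow_eq_one_iff_of_nonneg (norm_nonneg _) two_ne_zero, ← Complex.normSq_eq_norm_sq,
      Complex.normSq_mk]
    linear_combination hdet + g.1 0 0 * h00 + g.1 0 1 * h01
  obtain ⟨θ, hθ⟩ := Complex.norm_eq_one_iff _ |>.mp hnorm
  refine ⟨θ, ?_⟩
  have hre := congr_arg Complex.re hθ
  have him := congr_arg Complex.im hθ
  rw [Complex.exp_ofReal_mul_I_re] at hre
  rw [Complex.exp_ofReal_mul_I_im] at him
  ext i j
  fin_cases i <;> fin_cases j <;> simp [rotMat, hre, him] <;> linarith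

lemma existsUnique_smul_eq_self {g : SL2R} (hg : g.1.IsElliptic) :
    ∃! z : UpperHalfPlane, g • z = z := by
  have hell : g.toGL.IsElliptic := hg
  simp only [← toGL_smul, UpperHalfPlane.gl_smul_eq_self_iff_eq_fixedPt (by simp) hell,
    existsUnique_eq]

lemma exists_eq_conj_rotMat {g : SL2R} (hg : g.1.IsElliptic) :
    ∃ (k : SL2R) (θ : ℝ), k * rotMat θ * k⁻¹ = g := by
  obtain ⟨z, hgz : g • z = z, -⟩ := existsUnique_smul_eq_self hg
  obtain ⟨θ, hθ⟩ := exists_eq_rotMat_of_smul_I (g := z.toSL2R⁻¹ * g * z.toSL2R) (by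
    rw [mul_smul, mul_smul, UpperHalfPlane.toSL2R_smul_I, hgz, inv_smul_eq_iff,
      UpperHalfPlane.toSL2R_smul_I])
  exact ⟨z.toSL2R, θ, by rw [← hθ]; group⟩

lemma exists_isConj_mk_rotMat {g : SL2R} (hg : g.1.IsElliptic) :
    ∃ θ ∈ Set.Ioo 0 π, IsConj (rotMat θ : PSL2R) g := by
  obtain ⟨k, φ, rfl⟩ := exists_eq_conj_rotMat hg
  obtain ⟨θ, ⟨hθ₀, hθπ⟩, hθ⟩ := periodic_mk_rotMat.exists_mem_Ico₀ pi_pos φ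
  have hconj : IsConj (rotMat θ : PSL2R) (k * rotMat φ * k⁻¹ : SL2R) :=
    isConj_iff.mpr ⟨k, by rw [← hθ]; rfl⟩
  refine ⟨θ, ⟨hθ₀.lt_of_ne fun h0 ↦ ?_, hθπ⟩, hconj⟩
  rw [← h0, rotMat_zero, QuotientGroup.mk_one, isConj_one_right] at hconj
  rw [← isElliptic_mk_iff, hconj, ← QuotientGroup.mk_one, isElliptic_mk_iff,
    isElliptic_coe_iff] at hg
  simp [trace_one] at hg

end Rotation

lemma exists_finite_orbit_of_forall_smul_mem {G α : Type*} [Group G] [MulAction G α] {S F : Set α}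
    (hS : S.Finite) (hF : F.Finite) (h : ∀ g : G, ∃ p ∈ S, g • p ∈ F) :
    ∃ p ∈ S, (MulAction.orbit G p).Finite := by
  classical
  have hchoice (x : α × α) : ∃ c : G, (∃ g : G, g • x.1 = x.2) → c • x.1 = x.2 := by
    by_cases hx : ∃ g : G, g • x.1 = x.2
    · exact ⟨hx.choose, fun _ ↦ hx.choose_spec⟩
    · exact ⟨1, fun h ↦ absurd h hx⟩
  choose c hc using hchoice
  have hcover : ⋃ x ∈ (hS.prod hF).toFinset, c x • (MulAction.stabilizer G x.1 : Set G) =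
      Set.univ := by
    refine Set.eq_univ_of_forall fun g ↦ ?_
    obtain ⟨p, hp, hgp⟩ := h g
    refine Set.mem_biUnion (x := (p, g • p)) (by simp [hp, hgp]) ?_
    rw [mem_leftCoset_iff, SetLike.mem_coe, MulAction.mem_stabilizer_iff, mul_smul,
      inv_smul_eq_iff, hc (p, g • p) ⟨g, rfl⟩]
  obtain ⟨x, hx, hfin⟩ := Subgroup.exists_finiteIndex_of_leftCoset_cover hcover
  have : Finite (MulAction.orbit G x.1) :=
    Finite.of_equiv _ (MulAction.orbitEquivQuotientStabilizer G x.1).symm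
  exact ⟨x.1, (by simpa using hx : x.1 ∈ S ∧ x.2 ∈ F).1, Set.toFinite _⟩

section Eigenlines

variable {n K : Type*} [Fintype n] [Field K]

/-- The projective points spanned by the eigenvectors of a square matrix, including those of
eigenvalue `0`. -/
def eigenlines (M : Matrix n n K) : Set (ℙ K (n → K)) :=
  {p | p.submodule ∈ Module.End.invtSubmodule M.mulVecLin}

lemma mk_mem_eigenlines_iff {M : Matrix n n K} {v : n → K} (hv : v ≠ 0) :
    Projectivization.mk K v hv ∈ eigenlines M ↔ ∃ c : K, c • v = M *ᵥ v := by
  rw [eigenlines, Set.mem_ofPred_eq, Module.End.mem_invtSubmodule, Projectivization.submodule_mk,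
    Submodule.span_singleton_le_iff_mem, Submodule.mem_comap, mulVecLin_apply,
    Submodule.mem_span_singleton]

lemma smul_eq_self_iff_mem_eigenlines [DecidableEq n] {g : SpecialLinearGroup n K}
    {p : ℙ K (n → K)} : g • p = p ↔ p ∈ eigenlines g.1 := by
  induction p using Projectivization.ind with
  | h v hv =>
    rw [mk_mem_eigenlines_iff, Projectivization.smul_mk, Projectivization.mk_eq_mk_iff']
    rfl

variable {X M : Matrix (Fin 2) (Fin 2) K}

lemma exists_smul_eq_of_mulVec_eq_smul (hM : M ∉ Set.range (scalar (Fin 2)))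
    {v w : Fin 2 → K} {c : K} (hv : v ≠ 0) (hMv : M *ᵥ v = c • v) (hMw : M *ᵥ w = c • w) :
    ∃ a : K, a • v = w := by
  by_contra! hvw
  have hunit : IsUnit (of ![v, w])ᵀ := by
    rw [isUnit_transpose, ← linearIndependent_rows_iff_isUnit]
    exact (LinearIndependent.pair_iff' hv).mpr hvw
  refine hM ⟨c, hunit.mul_left_injective ?_⟩
  have hcols : M * (of ![v, w])ᵀ = (of ![M *ᵥ v, M *ᵥ w])ᵀ := by
    ext i j
    fin_cases j <;> rfl
  simp only [hcols, hMv, hMw]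
  ext i j
  fin_cases j <;> simp [scalar_apply]

lemma finite_eigenlines (hM : M ∉ Set.range (scalar (Fin 2))) : (eigenlines M).Finite := by
  have hcover : eigenlines M ⊆ ⋃ c ∈ spectrum K M, {p | M *ᵥ p.rep = c • p.rep} := fun p hp ↦ by
    rw [← p.mk_rep, mk_mem_eigenlines_iff] at hp
    obtain ⟨c, hc⟩ := hp
    refine Set.mem_biUnion ?_ hc.symm
    rw [← spectrum_toLin', ← Module.End.hasEigenvalue_iff_mem_spectrum]
    exact Module.End.hasEigenvalue_of_hasEigenvector
      ⟨Module.End.mem_eigenspace_iff.mpr hc.symm, p.rep_nonzero⟩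
  refine (M.finite_spectrum.biUnion fun c _ ↦ Set.Subsingleton.finite ?_).subset hcover
  intro p hp q hq
  rw [← p.mk_rep, ← q.mk_rep, Projectivization.mk_eq_mk_iff']
  exact exists_smul_eq_of_mulVec_eq_smul hM q.rep_nonzero hq hp

lemma exists_mem_eigenlines_of_mul_mul_eq_zero {Y : Matrix (Fin 2) (Fin 2) K} (hY : Y ≠ 0)
    (hYY : Y * Y = 0) :
    ∃ p, ∀ M : Matrix (Fin 2) (Fin 2) K, Y * M * Y = 0 → p ∈ eigenlines M := by
  obtain ⟨e, he⟩ : ∃ e, Y *ᵥ e ≠ 0 := by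
    contrapose! hY
    exact Matrix.ext_of_mulVec_single fun i ↦ by rw [hY, zero_mulVec]
  have hscalar : Y ∉ Set.range (scalar (Fin 2)) := by
    rintro ⟨c, rfl⟩
    rw [← map_mul, map_eq_zero_iff _ (fun _ _ ↦ scalar_inj.mp), mul_self_eq_zero] at hYY
    exact hY (by rw [hYY, map_zero])
  refine ⟨Projectivization.mk K (Y *ᵥ e) he, fun M hM ↦ (mk_mem_eigenlines_iff he).mpr <|
    exists_smul_eq_of_mulVec_eq_smul hscalar (c := 0) he ?_ ?_⟩
  · rw [mulVec_mulVec, hYY, zero_mulVec, zero_smul]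
  · rw [mulVec_mulVec, mulVec_mulVec, hM, zero_mulVec, zero_smul]

lemma nonempty_eigenlines_inter_of_det_lie_eq_zero (hM : M ∉ Set.range (scalar (Fin 2)))
    (hne : (eigenlines M).Nonempty) (hdet : ⁅X, M⁆.det = 0) :
    (eigenlines X ∩ eigenlines M).Nonempty := by
  by_cases hcomm : ⁅X, M⁆ = 0
  · obtain ⟨p, hp⟩ := hne
    refine ⟨p, ?_, hp⟩
    rw [← p.mk_rep, mk_mem_eigenlines_iff] at hp ⊢
    obtain ⟨c, hc⟩ := hp
    refine exists_smul_eq_of_mulVec_eq_smul hM p.rep_nonzero hc.symm ?_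
    rw [mulVec_mulVec, ← sub_eq_zero.mp ((Ring.lie_def X M).symm.trans hcomm), ← mulVec_mulVec,
      ← hc, mulVec_smul]
  · have hsandwich (N : Matrix (Fin 2) (Fin 2) K) (hN : (N * ⁅X, M⁆).trace = 0) :
        ⁅X, M⁆ * N * ⁅X, M⁆ = 0 := by
      rw [mul_mul_self_eq, hN, hdet, zero_smul, zero_smul, sub_zero]
    have hsq : ⁅X, M⁆ * ⁅X, M⁆ = 0 := by
      have hone := hsandwich 1 (by rw [one_mul, LieAlgebra.matrix_trace_commutator_zero])
      rwa [mul_one] at hone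
    obtain ⟨p, hp⟩ := exists_mem_eigenlines_of_mul_mul_eq_zero hcomm hsq
    refine ⟨p, hp X (hsandwich X (trace_mul_lie_self X M)), hp M (hsandwich M ?_)⟩
    rw [Ring.lie_def, ← neg_sub, ← Ring.lie_def, mul_neg, trace_neg, trace_mul_lie_self, neg_zero]

lemma nonempty_eigenlines_of_discr_nonneg {M : Matrix (Fin 2) (Fin 2) ℝ} (hM : 0 ≤ M.discr) :
    (eigenlines M).Nonempty := by
  obtain ⟨c, hc⟩ : ∃ c, 1 * (c * c) + -M.trace * c + M.det = 0 := by
    refine exists_quadratic_eq_zero one_ne_zero ⟨√M.discr, ?_⟩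
    rw [Real.mul_self_sqrt hM, discrim, discr_fin_two]
    ring
  have hdet : (c • 1 - M).det = 0 := by
    rw [← hc]
    simp [det_fin_two, trace_fin_two]
    ring
  obtain ⟨v, hv, hMv⟩ := exists_mulVec_eq_zero_iff.mpr hdet
  refine ⟨_, (mk_mem_eigenlines_iff hv).mpr ⟨c, ?_⟩⟩
  rwa [sub_mulVec, smul_mulVec, one_mulVec, sub_eq_zero] at hMv

end Eigenlines

lemma exists_ne_zero_forall_mem_of_isClosed_of_smul_mem {E ι : Type*} [NormedAddCommGroup E]
    [NormedSpace ℝ E] [ProperSpace E] {l : Filter ι} [NeBot l] {f : ι → E}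
    (hf : ∀ᶠ i in l, f i ≠ 0) :
    ∃ x ≠ 0, ∀ S : Set E, IsClosed S → (∀ (c : ℝ), ∀ y ∈ S, c • y ∈ S) → (∀ᶠ i in l, f i ∈ S) →
      x ∈ S := by
  have hsphere : ∀ᶠ i in l, ‖f i‖⁻¹ • f i ∈ Metric.sphere (0 : E) 1 := by
    filter_upwards [hf] with i hi
    rw [mem_sphere_zero_iff_norm, norm_smul, norm_inv, norm_norm, inv_mul_cancel₀ (by simpa)]
  obtain ⟨x, hx, hcluster⟩ :=
    (isCompact_sphere (0 : E) 1).exists_mapClusterPt (tendsto_principal.mpr hsphere)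
  refine ⟨x, ne_zero_of_mem_unit_sphere ⟨x, hx⟩, fun S hclosed hsmul hmem ↦ ?_⟩
  refine isClosed_iff_clusterPt.mp hclosed x (hcluster.clusterPt.mono (le_principal_iff.mpr ?_))
  exact hmem.mono fun i hi ↦ hsmul _ _ hi

lemma four_pow_mul_abs_det_lie_le (X : Matrix (Fin 2) (Fin 2) ℝ) (n : ℕ) {g : SL2R}
    (hg : 2 ≤ |g.1.trace|) : 4 ^ n * |⁅X, g.1⁆.det| ≤ |⁅X, (g ^ 2 ^ n).1⁆.det| := by
  induction n generalizing g with
  | zero => simp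
  | succ n ih =>
    have hsq : 4 ≤ g.1.trace ^ 2 := by rw [← sq_abs]; nlinarith
    have hg2 : 2 ≤ |(g ^ 2).1.trace| := by
      rw [trace_coe_sq]
      exact le_trans (by linarith) (le_abs_self _)
    calc 4 ^ (n + 1) * |⁅X, g.1⁆.det|
        ≤ 4 ^ n * (g.1.trace ^ 2 * |⁅X, g.1⁆.det|) := by rw [pow_succ, mul_assoc]; gcongr
      _ = 4 ^ n * |⁅X, (g ^ 2).1⁆.det| := by
          rw [lie_coe_sq, det_smul, Fintype.card_fin, abs_mul, abs_sq]
      _ ≤ |⁅X, (g ^ 2 ^ (n + 1)).1⁆.det| := by rw [pow_succ' 2 n, pow_mul]; exact ih hg2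

section Degeneration

variable {Γ : Subgroup SL2R}

lemma det_lie_eq_zero_of_bounded {X : Matrix (Fin 2) (Fin 2) ℝ} {C : ℝ}
    (hX : ∀ h ∈ Γ, |⁅X, h.1⁆.det| ≤ C) {g : SL2R} (hg : g ∈ Γ) (htr : 2 ≤ |g.1.trace|) :
    ⁅X, g.1⁆.det = 0 := by
  by_contra hne
  obtain ⟨n, hn⟩ := pow_unbounded_of_one_lt (C / |⁅X, g.1⁆.det|) (by norm_num : (1 : ℝ) < 4)
  rw [div_lt_iff₀ (abs_pos.mpr hne)] at hn
  exact (hn.trans_le (four_pow_mul_abs_det_lie_le X n htr)).not_ge (hX _ (pow_mem hg _))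

lemma abs_det_lie_le_discr {g h : SL2R} (hcomm : 2 ≤ ⁅g, h⁆.1.trace)
    (hconj : 2 ≤ (g * (h * g * h⁻¹)).1.trace) : |⁅g.1, h.1⁆.det| ≤ g.1.discr := by
  rw [trace_mul_conj] at hconj
  rw [trace_commutator] at hcomm hconj
  rw [discr_coe, abs_of_nonpos (by linarith)]
  linarith

lemma eventually_abs_det_lie_le_discr (hell : ∀ᶠ g in 𝓝 1, g ∈ Γ → ¬ g.1.IsElliptic) {h : SL2R}
    (hh : h ∈ Γ) : ∀ᶠ g in 𝓝 1, g ∈ Γ → |⁅g.1, h.1⁆.det| ≤ g.1.discr := by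
  have htr : ∀ᶠ g : SL2R in 𝓝 1, g ∈ Γ → 2 ≤ g.1.trace := by
    have hpos := (continuous_trace_coe.tendsto' 1 2 (by simp [trace_one])).eventually_const_lt
      two_pos
    filter_upwards [hell, hpos] with g hg hpos hgΓ
    have hg := hg hgΓ
    rwa [isElliptic_coe_iff, not_lt, abs_of_pos hpos] at hg
  have hcomm : Tendsto (fun g : SL2R ↦ ⁅g, h⁆) (𝓝 1) (𝓝 1) :=
    Continuous.tendsto' (by simp only [commutatorElement_def]; fun_prop) _ _
      (commutatorElement_one_left h)
  have hconj : Tendsto (fun g : SL2R ↦ g * (h * g * h⁻¹)) (𝓝 1) (𝓝 1) :=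
    Continuous.tendsto' (by fun_prop) _ _ (by simp)
  filter_upwards [hcomm.eventually htr, hconj.eventually htr] with g hcomm hconj hg
  have hconjΓ : h * g * h⁻¹ ∈ Γ := mul_mem (mul_mem hh hg) (inv_mem hh)
  have hcommΓ : ⁅g, h⁆ ∈ Γ :=
    Subgroup.commutator_le_self Γ (Subgroup.commutator_mem_commutator hg hh)
  exact abs_det_lie_le_discr (hcomm hcommΓ) (hconj (mul_mem hg hconjΓ))

lemma coe_notMem_range_scalar {g : SL2R} (hg : g ∉ Subgroup.center SL2R) :
    g.1 ∉ Set.range (scalar (Fin 2)) := by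
  rintro ⟨r, hr⟩
  refine hg (Matrix.SpecialLinearGroup.mem_center_iff.mpr ⟨r, ?_, hr⟩)
  rw [← g.det_coe, ← hr, scalar_apply, det_diagonal, Finset.prod_const, Finset.card_univ]

/-- The projection of a `2 × 2` matrix onto the traceless matrices along the scalar ones, which
is meaningful outside characteristic `2`. -/
def tracelessPart {K : Type*} [Field K] (M : Matrix (Fin 2) (Fin 2) K) :
    Matrix (Fin 2) (Fin 2) K :=
  M - scalar (Fin 2) (M.trace / 2)

section TracelessPart

variable {K : Type*} [Field K]

lemma lie_tracelessPart (X M : Matrix (Fin 2) (Fin 2) K) : ⁅tracelessPart X, M⁆ = ⁅X, M⁆ := by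
  have hcomm := (scalar_commute (X.trace / 2) (fun r ↦ Commute.all _ r) M).eq
  rw [Ring.lie_def, tracelessPart, sub_mul, mul_sub, hcomm, sub_sub_sub_cancel_right,
    ← Ring.lie_def]

lemma discr_tracelessPart (M : Matrix (Fin 2) (Fin 2) K) : (tracelessPart M).discr = M.discr := by
  have hsum : tracelessPart M =
      (-(M.trace / 2)) • (1 : Matrix (Fin 2) (Fin 2) K) + (1 : K) • M := by
    rw [tracelessPart, scalar_apply, ← smul_one_eq_diagonal]
    module
  rw [hsum, discr_smul_one_add_smul, one_pow, one_mul]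

variable [NeZero (2 : K)]

lemma trace_tracelessPart (M : Matrix (Fin 2) (Fin 2) K) : (tracelessPart M).trace = 0 := by
  simp [tracelessPart, trace_sub, mul_div_cancel₀ _ (two_ne_zero' K)]

lemma tracelessPart_eq_zero_iff {M : Matrix (Fin 2) (Fin 2) K} :
    tracelessPart M = 0 ↔ M ∈ Set.range (scalar (Fin 2)) := by
  rw [tracelessPart, sub_eq_zero]
  refine ⟨fun h ↦ ⟨_, h.symm⟩, ?_⟩
  rintro ⟨c, rfl⟩
  simp [mul_div_cancel_left₀ _ (two_ne_zero' K)]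

end TracelessPart

lemma isClosed_setOf_abs_det_lie_le_discr (N : Matrix (Fin 2) (Fin 2) ℝ) :
    IsClosed {M : Matrix (Fin 2) (Fin 2) ℝ | |⁅M, N⁆.det| ≤ M.discr} := by
  simp only [Ring.lie_def, discr_fin_two]
  exact isClosed_le (by fun_prop) (by fun_prop)

attribute [local instance] Matrix.normedAddCommGroup Matrix.normedSpace in
lemma exists_notMem_range_scalar_abs_det_lie_le_discr
    (hacc : ∃ᶠ g in 𝓝 1, g ∈ Γ ∧ g ∉ Subgroup.center SL2R)
    (hell : ∀ᶠ g in 𝓝 1, g ∈ Γ → ¬ g.1.IsElliptic) :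
    ∃ X ∉ Set.range (scalar (Fin 2)), ∀ h ∈ Γ, |⁅X, h.1⁆.det| ≤ X.discr := by
  have : NeBot (𝓝 (1 : SL2R) ⊓ 𝓟 {g | g ∈ Γ ∧ g ∉ Subgroup.center SL2R}) :=
    frequently_mem_iff_neBot.mp hacc
  obtain ⟨X, hX0, hX⟩ := exists_ne_zero_forall_mem_of_isClosed_of_smul_mem
    (l := 𝓝 (1 : SL2R) ⊓ 𝓟 {g | g ∈ Γ ∧ g ∉ Subgroup.center SL2R})
    (f := fun g ↦ tracelessPart g.1) <| mem_inf_of_right fun g hg ↦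
      tracelessPart_eq_zero_iff.not.mpr (coe_notMem_range_scalar hg.2)
  have htrace : X.trace = 0 := by
    refine hX {M | M.trace = 0} (isClosed_eq (by fun_prop) continuous_const) (fun c M hM ↦ ?_)
      (.of_forall fun g ↦ trace_tracelessPart g.1)
    rw [Set.mem_ofPred_eq] at hM ⊢
    rw [trace_smul, hM, smul_zero]
  refine ⟨X, ?_, fun h hh ↦ ?_⟩
  · rwa [← tracelessPart_eq_zero_iff, tracelessPart, htrace, zero_div, map_zero, sub_zero]
  · refine hX _ (isClosed_setOf_abs_det_lie_le_discr h.1) (fun c M hM ↦ ?_) ?_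
    · rw [Set.mem_ofPred_eq] at hM ⊢
      rw [det_lie_smul, discr_smul, abs_mul, abs_sq]
      gcongr
    · filter_upwards [mem_inf_of_left (eventually_abs_det_lie_le_discr hell hh),
        mem_inf_of_right (mem_principal_self _)] with g hle hg
      simpa only [Set.mem_ofPred_eq, lie_tracelessPart, discr_tracelessPart] using hle hg.1

lemma exists_finite_orbit_of_eventually_not_isElliptic
    (hacc : ∃ᶠ g in 𝓝 1, g ∈ Γ ∧ g ∉ Subgroup.center SL2R)
    (hell : ∀ᶠ g in 𝓝 1, g ∈ Γ → ¬ g.1.IsElliptic) :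
    ∃ p : ℙ ℝ (Fin 2 → ℝ), (MulAction.orbit Γ p).Finite := by
  obtain ⟨X, hXs, hX⟩ := exists_notMem_range_scalar_abs_det_lie_le_discr hacc hell
  obtain ⟨k, ⟨hkΓ, hkc⟩, hkell⟩ := (hacc.and_eventually hell).exists
  have hmeet (h : Γ) : ∃ p ∈ eigenlines X, h • p ∈ eigenlines k.1 := by
    set c : SL2R := (h : SL2R)⁻¹ * k * h with hc
    have hcΓ : c ∈ Γ := mul_mem (mul_mem (inv_mem h.2) hkΓ) h.2
    have hcc : c ∉ Subgroup.center SL2R := fun hmem ↦ hkc <| by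
      simpa [hc, mul_assoc] using Subgroup.Normal.conj_mem inferInstance c hmem h
    have htr : 2 ≤ |c.1.trace| := by
      have hconj : c = (h : SL2R)⁻¹ * k * (h : SL2R)⁻¹⁻¹ := by rw [inv_inv]
      rw [hconj, trace_coe_conj]
      exact not_lt.mp (isElliptic_coe_iff.not.mp (hkell hkΓ))
    have hdiscr : 0 ≤ c.1.discr := by
      rw [discr_coe, ← sq_abs]
      nlinarith
    obtain ⟨p, hpX, hpc⟩ := nonempty_eigenlines_inter_of_det_lie_eq_zero
      (coe_notMem_range_scalar hcc) (nonempty_eigenlines_of_discr_nonneg hdiscr)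
      (det_lie_eq_zero_of_bounded hX hcΓ htr)
    rw [← smul_eq_self_iff_mem_eigenlines, hc, mul_smul, mul_smul, inv_smul_eq_iff] at hpc
    exact ⟨p, hpX, smul_eq_self_iff_mem_eigenlines.mp hpc⟩
  obtain ⟨p, -, hp⟩ := exists_finite_orbit_of_forall_smul_mem (finite_eigenlines hXs)
    (finite_eigenlines (coe_notMem_range_scalar hkc)) hmeet
  exact ⟨p, hp⟩

lemma exists_finite_orbit_of_forall_commute {E : SL2R} (hE : E.1.IsElliptic)
    (hcomm : ∀ h ∈ Γ, Commute E h) : ∃ z : UpperHalfPlane, (MulAction.orbit Γ z).Finite := by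
  obtain ⟨z, hz, huniq⟩ := existsUnique_smul_eq_self hE
  refine ⟨z, (Set.finite_singleton z).subset ?_⟩
  rintro _ ⟨h, rfl⟩
  refine huniq (h • z) ?_
  change E • h.1 • z = h.1 • z
  rw [smul_smul, (hcomm h h.2).eq, mul_smul, hz]

end Degeneration

lemma isElementary_iff_exists_finite_orbit {G : Subgroup PSL2R} :
    IsElementary G ↔
      (∃ z : UpperHalfPlane, (MulAction.orbit (G.comap (QuotientGroup.mk' _)) z).Finite) ∨
      ∃ p : ℙ ℝ (Fin 2 → ℝ), (MulAction.orbit (G.comap (QuotientGroup.mk' _)) p).Finite := by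
  have horbit {α : Type} [MulAction SL2R α] (x : α) :
      MulAction.orbit (G.comap (QuotientGroup.mk' (Subgroup.center SL2R))) x =
        {y | ∃ g : SL2R, (g : PSL2R) ∈ G ∧ g • x = y} := by
    ext y
    simp only [MulAction.mem_orbit_iff, Subtype.exists, Subgroup.mem_comap,
      QuotientGroup.mk'_apply, Subgroup.mk_smul, exists_prop, Set.mem_ofPred_eq]
  simp only [horbit]
  rfl

section InfiniteOrder

lemma iterate_commutator_mem {G : Type*} [Group G] {Γ : Subgroup G} {g h : G} (hg : g ∈ Γ)
    (hh : h ∈ Γ) (n : ℕ) : (fun c ↦ ⁅g, c⁆)^[n] h ∈ Γ := by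
  have hmaps : Set.MapsTo (fun c ↦ ⁅g, c⁆) Γ Γ := fun c hc ↦
    Subgroup.commutator_le_self Γ (Subgroup.commutator_mem_commutator hg hc : ⁅g, c⁆ ∈ ⁅Γ, Γ⁆)
  exact hmaps.iterate n hh

lemma not_commute_iterate_commutator {F : Type*} [Field F] [LinearOrder F] [IsStrictOrderedRing F]
    {g h : SL(2, F)} (hg : g.1.IsElliptic) (hgh : ¬ Commute g h) (n : ℕ) :
    ¬ Commute g ((fun c ↦ ⁅g, c⁆)^[n] h) :=
  Set.MapsTo.iterate (s := {c | ¬ Commute g c}) (fun _ hc ↦ not_commute_commutator hg hc) n hgh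

lemma finite_setOf_trace_of_isOfFinOrder_of_mem_closure_pair {A B : SL2R} (hA : IsOfFinOrder A)
    (hB : IsOfFinOrder B) (hAB : IsOfFinOrder (A * B)) :
    {t | ∃ C ∈ Subgroup.closure {A, B}, IsOfFinOrder C ∧ C.1.trace = t}.Finite := by
  let K := IntermediateField.adjoin ℚ {A.1.trace, B.1.trace, (A * B).1.trace}
  have hgen : ({A.1.trace, B.1.trace, (A * B).1.trace} : Set ℝ) ⊆ K :=
    IntermediateField.subset_adjoin ℚ _
  have : FiniteDimensional ℚ K := by
    refine IntermediateField.finiteDimensional_adjoin ?_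
    rintro _ (rfl | rfl | rfl)
    exacts [(isIntegral_trace_of_isOfFinOrder hA).tower_top,
      (isIntegral_trace_of_isOfFinOrder hB).tower_top,
      (isIntegral_trace_of_isOfFinOrder hAB).tower_top]
  have : NumberField K := ⟨⟩
  refine (finite_setOf_trace_of_isOfFinOrder K).subset ?_
  rintro _ ⟨C, hC, hCfin, rfl⟩
  exact ⟨trace_mem_of_mem_closure_pair (K := K.toSubring) (hgen (by simp)) (hgen (by simp))
    (hgen (by simp)) hC, C, hCfin, rfl⟩

lemma isElliptic_mul_conj {F : Type*} [Field F] [LinearOrder F] [IsStrictOrderedRing F]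
    {g h : SL(2, F)} (hg : g.1.IsElliptic) (hgh : ¬ Commute g h)
    (hlow : -2 < (g * (h * g * h⁻¹)).1.trace) : (g * (h * g * h⁻¹)).1.IsElliptic := by
  refine isElliptic_coe_iff.mpr (abs_lt.mpr ⟨hlow, ?_⟩)
  have hsq := sq_lt_sq' (abs_lt.mp (isElliptic_coe_iff.mp hg)).1
    (abs_lt.mp (isElliptic_coe_iff.mp hg)).2
  linarith [trace_mul_conj g h, two_lt_trace_commutator hg hgh]

lemma tendsto_trace_mul_conj {ι : Type*} {l : Filter ι} {A : SL2R} {C : ι → SL2R}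
    (hC : Tendsto C l (𝓝 1)) :
    Tendsto (fun n ↦ (A * (C n * A * (C n)⁻¹)).1.trace) l (𝓝 (A.1.trace ^ 2 - 2)) := by
  rw [← trace_coe_sq, sq]
  have hlim := ((hC.mul_const A).mul hC.inv).const_mul A
  rw [one_mul, inv_one, mul_one] at hlim
  exact (continuous_trace_coe.tendsto _).comp hlim

lemma exists_mem_closure_pair_isElliptic_not_isOfFinOrder {A h : SL2R} (hA : A.1.IsElliptic)
    (htr : 0 < A.1.trace) (hAh : ¬ Commute A h) (hlow : -2 < (A * (h * A * h⁻¹)).1.trace)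
    (hlim : Tendsto (fun n ↦ (fun C ↦ ⁅A, C⁆)^[n] (h * A * h⁻¹)) atTop (𝓝 1)) :
    ∃ E ∈ Subgroup.closure {A, h * A * h⁻¹}, E.1.IsElliptic ∧ ¬ IsOfFinOrder E := by
  by_contra! hfin
  set B := h * A * h⁻¹
  set C : ℕ → SL2R := fun n ↦ (fun C ↦ ⁅A, C⁆)^[n] B
  have hAΓ : A ∈ Subgroup.closure {A, B} := Subgroup.subset_closure (by simp)
  have hBΓ : B ∈ Subgroup.closure {A, B} := Subgroup.subset_closure (by simp)
  have hAC (n : ℕ) : ¬ Commute A (C n) :=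
    not_commute_iterate_commutator hA (not_commute_conj hA hAh) n
  set t : ℕ → ℝ := fun n ↦ (A * (C n * A * (C n)⁻¹)).1.trace
  have ht : Tendsto t atTop (𝓝 (A.1.trace ^ 2 - 2)) := tendsto_trace_mul_conj hlim
  have htlt (n : ℕ) : t n < A.1.trace ^ 2 - 2 := by
    linarith [trace_mul_conj A (C n), two_lt_trace_commutator hA (hAC n)]
  have hAfin := hfin A hAΓ hA
  have htraces := finite_setOf_trace_of_isOfFinOrder_of_mem_closure_pair hAfin
    (hfin B hBΓ (by rwa [isElliptic_coe_iff, trace_coe_conj, ← isElliptic_coe_iff]))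
    (hfin (A * B) (mul_mem hAΓ hBΓ) (isElliptic_mul_conj hA hAh hlow))
  have hmem : ∀ᶠ n in atTop, t n ∈
      {t | ∃ C ∈ Subgroup.closure {A, B}, IsOfFinOrder C ∧ C.1.trace = t} ∩
        Set.Iio (A.1.trace ^ 2 - 2) := by
    filter_upwards [ht.eventually_const_lt (u := -2) (by nlinarith)] with n hn
    have hCΓ : C n ∈ Subgroup.closure {A, B} := iterate_commutator_mem hAΓ hBΓ n
    have hmulΓ := mul_mem hAΓ (mul_mem (mul_mem hCΓ hAΓ) (inv_mem hCΓ))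
    exact ⟨⟨_, hmulΓ, hfin _ hmulΓ (isElliptic_mul_conj hA (hAC n) hn), rfl⟩, htlt n⟩
  exact Set.self_notMem_Iio ((htraces.inter_of_left _).isClosed.mem_of_tendsto ht hmem).2

lemma eventually_exists_mem_closure_pair_isElliptic_not_isOfFinOrder (h : SL2R) :
    ∀ᶠ A in 𝓝 1, A.1.IsElliptic → ¬ Commute A h →
      ∃ E ∈ Subgroup.closure {A, h * A * h⁻¹}, E.1.IsElliptic ∧ ¬ IsOfFinOrder E := by
  have htrace : ((1 : SL2R).1.trace : ℝ) = 2 := by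
    rw [Matrix.SpecialLinearGroup.coe_one, trace_one, Fintype.card_fin, Nat.cast_ofNat]
  have hid : Tendsto (fun A : SL2R ↦ A) (𝓝 1) (𝓝 1) := tendsto_id
  have hconj : Tendsto (fun A ↦ h * A * h⁻¹) (𝓝 1) (𝓝 1) := by
    simpa using (hid.const_mul h).mul_const h⁻¹
  have hmul : Tendsto (fun A ↦ A * (h * A * h⁻¹)) (𝓝 1) (𝓝 1) := by
    simpa using hid.mul hconj
  have hpos (u : ℝ) (hu : u < 2) : ∀ᶠ g : SL2R in 𝓝 1, u < g.1.trace :=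
    continuous_trace_coe.continuousAt.eventually_const_lt (hu.trans_eq htrace.symm)
  filter_upwards [hpos 0 two_pos, hmul.eventually (hpos (-2) (by norm_num)),
    (hid.prodMk_nhds hconj).eventually eventually_tendsto_iterate_commutator]
    with A htr hlow hlim hA hAh
  exact exists_mem_closure_pair_isElliptic_not_isOfFinOrder hA htr hAh hlow hlim

lemma exists_isElliptic_not_isOfFinOrder {Γ : Subgroup SL2R}
    (hacc : ∃ᶠ g in 𝓝 1, g ∈ Γ ∧ g ∉ Subgroup.center SL2R)
    (hplane : ∀ z : UpperHalfPlane, (MulAction.orbit Γ z).Infinite)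
    (hline : ∀ p : ℙ ℝ (Fin 2 → ℝ), (MulAction.orbit Γ p).Infinite) :
    ∃ E ∈ Γ, E.1.IsElliptic ∧ ¬ IsOfFinOrder E := by
  have hfreq : ∃ᶠ A in 𝓝 1, A ∈ Γ ∧ A.1.IsElliptic := fun hcon ↦ by
    obtain ⟨p, hp⟩ := exists_finite_orbit_of_eventually_not_isElliptic hacc
      (hcon.mono fun _ ↦ not_and.mp)
    exact hline p hp
  obtain ⟨E, hEΓ, hE⟩ := hfreq.exists
  obtain ⟨h, hhΓ, hEh⟩ : ∃ h ∈ Γ, ¬ Commute E h := by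
    by_contra! hcomm
    obtain ⟨z, hz⟩ := exists_finite_orbit_of_forall_commute hE hcomm
    exact hplane z hz
  obtain ⟨A, ⟨hAΓ, hA⟩, hAE, hAh⟩ := (hfreq.and_eventually
    ((eventually_exists_mem_closure_pair_isElliptic_not_isOfFinOrder E).and
      (eventually_exists_mem_closure_pair_isElliptic_not_isOfFinOrder h))).exists
  have hclosure {c : SL2R} (hc : c ∈ Γ) : Subgroup.closure {A, c * A * c⁻¹} ≤ Γ := by
    rw [Subgroup.closure_le, Set.pair_subset_iff]
    exact ⟨hAΓ, mul_mem (mul_mem hc hAΓ) (inv_mem hc)⟩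
  by_cases hcomm : Commute A E
  · have hAh' : ¬ Commute A h := fun hcomm' ↦ hEh <| commute_coe_iff.mp <|
      commute_of_isElliptic hA (commute_coe_iff.mpr hcomm) (commute_coe_iff.mpr hcomm')
    obtain ⟨F, hF, hFell⟩ := hAh hA hAh'
    exact ⟨F, hclosure hhΓ hF, hFell⟩
  · obtain ⟨F, hF, hFell⟩ := hAE hA hcomm
    exact ⟨F, hclosure hEΓ hF, hFell⟩

end InfiniteOrder

/-- Every non-elementary, non-discrete subgroup of `PSL(2,ℝ)` contains an elliptic element of
infinite order; moreover such an element is conjugate in `PSL(2,ℝ)` to the class of a rotation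
matrix `R(θ)` with `θ ∈ (0,π)` and `θ/π` irrational. -/
theorem exists_elliptic_infinite_order (G : Subgroup PSL2R)
    (h_nonelem : ¬ IsElementary G) (h_nondisc : ¬ IsDiscreteSubgroup G) :
    ∃ A ∈ G, IsElliptic A ∧ ¬ IsOfFinOrder A ∧
      ∃ θ ∈ Set.Ioo (0:ℝ) Real.pi, Irrational (θ / Real.pi) ∧
        IsConj (QuotientGroup.mk (rotMat θ) : PSL2R) A := by
  rw [isElementary_iff_exists_finite_orbit] at h_nonelem
  push Not at h_nonelem
  obtain ⟨E, hEG, hE, hEord⟩ := exists_isElliptic_not_isOfFinOrder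
    (frequently_mk_mem_and_notMem h_nondisc) h_nonelem.1 h_nonelem.2
  have hAord : ¬ IsOfFinOrder (E : PSL2R) := fun hfin ↦ hEord (isOfFinOrder_of_mk hfin)
  obtain ⟨θ, hθ, hconj⟩ := exists_isConj_mk_rotMat hE
  refine ⟨E, hEG, isElliptic_mk_iff.mpr hE, hAord, θ, hθ, ?_, hconj⟩
  by_contra hrat
  exact hAord (hconj.isOfFinOrder (isOfFinOrder_mk_rotMat hrat))
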